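/- Let C₇ = ⟨(x+1)^a + u(x+1)^{t₁} h₁(x) + u²(x+1)^{t₂} h₂(x), u(x+1)^b + u²(x+1)^{t₃} h₃(x)⟩ be a Type 7 ideal of 𝓡, where 0 ≤ b < U ≤ a ≤ 2^s − 1 with U = a if h₁ = 0 and U = min{a, 2^s − a + t₁} if h₁ ≠ 0, 0 ≤ t₁ < b, h₁, h₂, h₃ each either 0 or a unit of 𝓚, and 0 ≤ t₂ < W, 0 ≤ t₃ < W, where W = min{k ≥ 0 : u²(x+1)^k ∈ C₇}. Then W equals: (1) b, if h₁ = h₂ = h₃ = 0; (2) min{b, a − b + t₃}, if h₁ = h₂ = 0 and h₃ ≠ 0; (3) min{2^s − a + t₂, b}, if h₂ ≠ 0 and h₁ = h₃ = 0; (4) min{2^s − a + t₂, b, a − b + t₃}, if h₁ = 0, h₂ ≠ 0 and h₃ ≠ 0; (5) t₁, if h₁ ≠ 0 and h₂ = h₃ = 0; (6) min{2^s − a + t₂, t₁}, if h₁ ≠ 0, h₂ ≠ 0 and h₃ = 0; (7) min{β₃, β₄, b, 2^s − b + t₃}, if h₁ ≠ 0 and h₃ ≠ 0; where β₃ = 2^s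 − a + t₁ − b + t₃ if h₂ = 0, β₃ = min{2^s − a + t₂, 2^s − a + t₁ − b + t₃} if h₂ ≠ 0 and t₂ ≠ t₁ − b + t₃, β₃ = 2^s − a + t₁ − b + t₃ + α₃ if h₂ ≠ 0 and t₂ = t₁ − b + t₃; β₄ = min{t₁, a − b + t₃} if t₁ ≠ a − b + t₃, β₄ = t₁ + α₄ if t₁ = a − b + t₃; α₃ = max{0 ≤ k ≤ 2^s : (x+1)^k divides h₂(x) − h₁(x)h₃(x) in 𝓚}; α₄ = max{0 ≤ k ≤ 2^s : (x+1)^k divides h₁(x) − h₃(x) in 𝓚}. -/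

import Mathlib

noncomputable section

open Polynomial

/-- The finite field `GF(2^m)`. -/
abbrev Fq (m : ℕ) : Type := GaloisField 2 m

/-- The ring `R₃ = F[u]/⟨u³⟩`. -/
abbrev R3 (m : ℕ) : Type := AdjoinRoot (X ^ 3 : (Fq m)[X])

/-- The polynomial `x^{2^s} + 1` over `R₃`. -/
abbrev gR (m s : ℕ) : (R3 m)[X] := X ^ (2 ^ s) + 1

/-- The polynomial `x^{2^s} + 1` over `F`. -/
abbrev gK (m s : ℕ) : (Fq m)[X] := X ^ (2 ^ s) + 1

/-- The ring `𝓡 = R₃[x]/⟨x^{2^s}+1⟩`. -/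
abbrev RR (m s : ℕ) : Type := AdjoinRoot (gR m s)

/-- The ring `𝓚 = F[x]/⟨x^{2^s}+1⟩`. -/
abbrev KK (m s : ℕ) : Type := AdjoinRoot (gK m s)

/-- The element `u` of `R₃`. -/
def uu (m : ℕ) : R3 m := AdjoinRoot.root _

/-- The element `u` of `𝓡`. -/
def uR (m s : ℕ) : RR m s := algebraMap (R3 m) (RR m s) (uu m)

/-- The element `x` of `𝓡`. -/
def xR (m s : ℕ) : RR m s := AdjoinRoot.root _

/-- The element `x` of `𝓚`. -/
def xK (m s : ℕ) : KK m s := AdjoinRoot.root _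

lemma gR_monic (m s : ℕ) : (gR m s).Monic := by
  have h : (gR m s) = X ^ (2 ^ s) + C 1 := by simp [gR]
  rw [h]; exact monic_X_pow_add_C _ (by positivity)

lemma gK_monic (m s : ℕ) : (gK m s).Monic := by
  have h : (gK m s) = X ^ (2 ^ s) + C 1 := by simp [gK]
  rw [h]; exact monic_X_pow_add_C _ (by positivity)

/-- The standard representative (of degree `< 2^s`) of an element of `𝓡`. -/
def repR (m s : ℕ) (c : RR m s) : (R3 m)[X] := AdjoinRoot.modByMonicHom (gR_monic m s) c

/-- The standard representative (of degree `< 2^s`) of an element of `𝓚`. -/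
def repK (m s : ℕ) (c : KK m s) : (Fq m)[X] := AdjoinRoot.modByMonicHom (gK_monic m s) c

/-- The `j`-th coefficient of the standard representative of `c ∈ 𝓡`. -/
def coeffR (m s : ℕ) (c : RR m s) (j : ℕ) : R3 m := (repR m s c).coeff j

/-- The dot product on `𝓡`. -/
def dotR (m s : ℕ) (c d : RR m s) : R3 m :=
  ∑ j ∈ Finset.range (2 ^ s), coeffR m s c j * coeffR m s d j

/-- The dual of a set of codewords. -/
def dualSet (m s : ℕ) (S : Set (RR m s)) : Set (RR m s) :=
  {c | ∀ d ∈ S, dotR m s c d = 0}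

/-- A cyclic code (ideal of `𝓡`) is self-dual if it coincides with its dual. -/
def IsSelfDual (m s : ℕ) (C : Ideal (RR m s)) : Prop :=
  (C : Set (RR m s)) = dualSet m s (C : Set (RR m s))

/-- The annihilator of a set of codewords. -/
def annSet (m s : ℕ) (S : Set (RR m s)) : Set (RR m s) :=
  {c | ∀ d ∈ S, c * d = 0}

/-- The reciprocal `c*(x) = x^{deg c} c(x⁻¹)` of an element of `𝓡`. -/
def recip (m s : ℕ) (c : RR m s) : RR m s :=
  xR m s ^ (repR m s c).natDegree *
    Polynomial.aeval (Ring.inverse (xR m s)) (repR m s c)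

/-- Reduction `R₃ → F` modulo `u`. -/
def epsR3 (m : ℕ) : R3 m →+* Fq m :=
  AdjoinRoot.lift (RingHom.id (Fq m)) 0 (by simp)

lemma xK_pow_add_one (m s : ℕ) : (xK m s) ^ (2 ^ s) + 1 = 0 := by
  have h := AdjoinRoot.eval₂_root (gK m s)
  simpa [gK, xK] using h

lemma xR_pow_add_one (m s : ℕ) : (xR m s) ^ (2 ^ s) + 1 = 0 := by
  have h := AdjoinRoot.eval₂_root (gR m s)
  simpa [gR, xR] using h

/-- Reduction `μ : 𝓡 → 𝓚` modulo `u`. -/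
def muRK (m s : ℕ) : RR m s →+* KK m s :=
  AdjoinRoot.lift ((algebraMap (Fq m) (KK m s)).comp (epsR3 m)) (xK m s) (by
    simp only [gR, eval₂_add, eval₂_pow, eval₂_X, eval₂_one]
    exact xK_pow_add_one m s)

/-- The natural inclusion `𝓚 → 𝓡`. -/
def KtoR (m s : ℕ) : KK m s →+* RR m s :=
  AdjoinRoot.lift ((algebraMap (R3 m) (RR m s)).comp (algebraMap (Fq m) (R3 m))) (xR m s) (by
    simp only [gK, eval₂_add, eval₂_pow, eval₂_X, eval₂_one]
    exact xR_pow_add_one m s)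

/-- The `i`-th torsion code of a set `S ⊆ 𝓡`. -/
def TorSet (m s : ℕ) (S : Set (RR m s)) (i : ℕ) : Set (KK m s) :=
  muRK m s '' {f | (uR m s) ^ i * f ∈ S}

/-- The torsion degree `T_i`: the (unique) `k` with `Tor_i = ⟨(x+1)^k⟩`. -/
def Tdeg (m s : ℕ) (S : Set (RR m s)) (i : ℕ) : ℕ :=
  sInf {k | TorSet m s S i =
    ((Ideal.span {(xK m s + 1) ^ k} : Ideal (KK m s)) : Set (KK m s))}

/-- Substitution `h(x) ↦ h(x⁻¹)` on `𝓚`. -/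
def invSub (m s : ℕ) (h : KK m s) : KK m s :=
  Polynomial.aeval (Ring.inverse (xK m s)) (repK m s h)


open scoped Classical

/-! Since `𝓡 = 𝓚[u]/⟨u³⟩`, membership of `u² f` in `C₇` can be read off coefficientwise in `u`.
Put `y = x + 1`, of nilpotency index `N = 2^s` in the chain ring `𝓚`. As the annihilator of `y^k`
is generated by `y^(N-k)`, the `f ∈ 𝓚` with `u² f ∈ C₇` form the ideal generated by
`y^(N-a+t₂) h₂ - y^(N-a+t₁-b+t₃) h₁ h₃`, `y^t₁ h₁ - y^(a-b+t₃) h₃`, `y^b` and `y^(N-b+t₃) h₃`.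
Each generator is associated to a power of `y`, and `W` is the least exponent that occurs: for a
difference it is the smaller of the two exponents, except that when they agree the order of the
difference of the units is added, which is where `α₃` and `α₄` come from. -/

/-- `y` generates the maximal ideal of a chain ring `K` (a local ring whose ideals are the
powers of `(y)`), and `N` is the index of nilpotency of `y`. The trivial ring is allowed, with
`N = 0`. -/
structure IsChainUniformizer {K : Type*} [CommRing K] (y : K) (N : ℕ) : Prop where
  isUnit_or_dvd (z : K) : IsUnit z ∨ y ∣ z
  pow_eq_zero_iff (k : ℕ) : y ^ k = 0 ↔ N ≤ k

/-- The `y`-adic order of `z`, truncated at `N`, so that `0` has order `N`. -/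
def truncOrder {K : Type*} [CommRing K] (y : K) (N : ℕ) (z : K) : ℕ :=
  sSup {k | k ≤ N ∧ y ^ k ∣ z}

namespace IsChainUniformizer

variable {K : Type*} [CommRing K] {y : K} {N : ℕ}

lemma associated_pow_truncOrder (hy : IsChainUniformizer y N) (z : K) :
    Associated (y ^ truncOrder y N z) z := by
  have bdd : BddAbove {k | k ≤ N ∧ y ^ k ∣ z} := ⟨N, fun _ hk => hk.1⟩
  obtain ⟨hle, w, hw⟩ : truncOrder y N z ≤ N ∧ y ^ truncOrder y N z ∣ z :=
    Nat.sSup_mem ⟨0, by simp⟩ bdd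
  rcases hle.eq_or_lt with heq | hlt
  · rw [heq] at hw ⊢
    rw [hw, (hy.pow_eq_zero_iff N).2 le_rfl, zero_mul]
  · rcases hy.isUnit_or_dvd w with hu | ⟨c, rfl⟩
    · conv_rhs => rw [hw]
      exact (associated_mul_unit_left _ _ hu).symm
    · have hmem : truncOrder y N z + 1 ∈ {k | k ≤ N ∧ y ^ k ∣ z} :=
        ⟨hlt, c, by rw [pow_succ, mul_assoc, ← hw]⟩
      exact absurd (le_csSup bdd hmem) (Nat.lt_irrefl _)

lemma pow_dvd_pow_iff (hy : IsChainUniformizer y N) {i k : ℕ} :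
    y ^ i ∣ y ^ k ↔ i ≤ k ∨ N ≤ k := by
  constructor
  · intro h
    by_contra! hlt
    have hdvd : y ^ (i + (N - 1 - k)) ∣ y ^ (N - 1) := by
      simpa [← pow_add, Nat.add_sub_cancel' (show k ≤ N - 1 by omega)] using
        mul_dvd_mul_right h (y ^ (N - 1 - k))
    rw [(hy.pow_eq_zero_iff _).2 (by omega), zero_dvd_iff, hy.pow_eq_zero_iff] at hdvd
    omega
  · rintro (h | h)
    · exact pow_dvd_pow y h
    · exact (hy.pow_eq_zero_iff k).2 h ▸ dvd_zero _

lemma pow_sub_dvd_of_mul_pow_eq_zero (hy : IsChainUniformizer y N) {p : K} {a : ℕ}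
    (h : p * y ^ a = 0) : y ^ (N - a) ∣ p := by
  have hp := hy.associated_pow_truncOrder p
  have h0 : y ^ (truncOrder y N p + a) = 0 := by
    rw [pow_add, ← zero_dvd_iff, ← h]
    exact mul_dvd_mul_right hp.symm.dvd _
  have hN := (hy.pow_eq_zero_iff _).1 h0
  exact (pow_dvd_pow y (by omega)).trans hp.dvd

lemma isUnit_add_pow_mul (hy : IsChainUniformizer y N) {g : K} (hg : IsUnit g) {d : ℕ}
    (hd : d ≠ 0) (h : K) : IsUnit (g + y ^ d * h) := by
  have hnil : IsNilpotent y := ⟨N, (hy.pow_eq_zero_iff N).2 le_rfl⟩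
  exact ((Commute.all _ _).isNilpotent_mul_right
    (hnil.pow_of_pos hd)).isUnit_add_left_of_commute hg (Commute.all _ _)

lemma associated_pow_mul (hy : IsChainUniformizer y N) {h : K} (hh : h = 0 ∨ IsUnit h) (v : ℕ) :
    Associated (y ^ if h = 0 then N else v) (y ^ v * h) := by
  split_ifs with h0
  · rw [h0, mul_zero, (hy.pow_eq_zero_iff N).2 le_rfl]
  · exact (associated_mul_unit_left _ _ (hh.resolve_left h0)).symm

lemma associated_pow_mul_sub_of_lt (hy : IsChainUniformizer y N) {g : K} (hg : IsUnit g) (h : K)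
    {i j : ℕ} (hij : i < j) : Associated (y ^ i) (y ^ i * g - y ^ j * h) := by
  have hfactor : y ^ i * g - y ^ j * h = y ^ i * (g + y ^ (j - i) * -h) := by
    rw [← pow_sub_mul_pow y hij.le]
    ring
  rw [hfactor]
  exact (associated_mul_unit_left _ _ (hy.isUnit_add_pow_mul hg (by omega) _)).symm

lemma associated_pow_mul_sub (hy : IsChainUniformizer y N) {g h : K} (hg : g = 0 ∨ IsUnit g)
    (hh : IsUnit h) (i j : ℕ) :
    Associated
      (y ^ if g = 0 then j else if i ≠ j then min i j else i + truncOrder y N (g - h))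
      (y ^ i * g - y ^ j * h) := by
  split_ifs with hg₀ hij
  · rw [hg₀, mul_zero, zero_sub]
    exact (associated_mul_unit_left _ _ hh).symm.neg_right
  · rcases hij.lt_or_gt with hlt | hlt
    · rw [min_eq_left hlt.le]
      exact hy.associated_pow_mul_sub_of_lt (hg.resolve_left hg₀) h hlt
    · rw [min_eq_right hlt.le, ← neg_sub]
      exact (hy.associated_pow_mul_sub_of_lt hh g hlt).neg_right
  · rw [← not_not.1 hij, pow_add, ← mul_sub]
    exact (hy.associated_pow_truncOrder _).mul_left _

lemma sInf_pow_mem_span_pow (hy : IsChainUniformizer y N) (w : ℕ) :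
    sInf {k | y ^ k ∈ Ideal.span {y ^ w}} = min w N := by
  have hset : {k | y ^ k ∈ Ideal.span {y ^ w}} = Set.Ici (min w N) := by
    ext k
    simp [Ideal.mem_span_singleton, hy.pow_dvd_pow_iff]
  rw [hset, csInf_Ici]

end IsChainUniformizer

section Span

variable {K : Type*} [CommRing K]

lemma span_singleton_eq_of_associated {z w : K} (h : Associated z w) :
    Ideal.span {w} = Ideal.span {z} :=
  le_antisymm (Ideal.span_singleton_le_span_singleton.2 h.dvd)
    (Ideal.span_singleton_le_span_singleton.2 h.symm.dvd)

lemma span_pow_sup_span_pow (y : K) (i j : ℕ) :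
    Ideal.span {y ^ i} ⊔ Ideal.span {y ^ j} = Ideal.span {y ^ min i j} := by
  rcases le_total i j with h | h
  · rw [min_eq_left h, sup_eq_left, Ideal.span_singleton_le_span_singleton]
    exact pow_dvd_pow y h
  · rw [min_eq_right h, sup_eq_right, Ideal.span_singleton_le_span_singleton]
    exact pow_dvd_pow y h

end Span

section CubicExtension

variable {K R : Type*} [CommRing K] [CommRing R] [Algebra K R]

lemma root_pow_three (hR : IsAdjoinRoot R (X ^ 3 : K[X])) : hR.root ^ 3 = 0 := by
  simpa only [map_pow, aeval_X] using hR.aeval_root_self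

lemma exists_eq_add_root_mul (hR : IsAdjoinRoot R (X ^ 3 : K[X])) (z : R) :
    ∃ p q r, z = algebraMap K R p + hR.root * algebraMap K R q
      + hR.root ^ 2 * algebraMap K R r := by
  obtain ⟨P, rfl⟩ := hR.map_surjective z
  refine ⟨P.coeff 0, P.coeff 1, P.coeff 2, ?_⟩
  have hP : X ^ 3 ∣ P - (C (P.coeff 0) + X * C (P.coeff 1) + X ^ 2 * C (P.coeff 2)) := by
    rw [X_pow_dvd_iff]
    intro d hd
    interval_cases d <;> simp [coeff_X_pow, coeff_C, coeff_X]
  rw [← hR.map_eq_zero_iff, map_sub, sub_eq_zero] at hP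
  simpa [hR.algebraMap_apply, -X_pow_mul_C, -X_mul_C] using hP

lemma add_root_mul_eq_zero_iff (hR : IsAdjoinRoot R (X ^ 3 : K[X])) {p q r : K} :
    algebraMap K R p + hR.root * algebraMap K R q + hR.root ^ 2 * algebraMap K R r = 0 ↔
      p = 0 ∧ q = 0 ∧ r = 0 := by
  have hmap : algebraMap K R p + hR.root * algebraMap K R q + hR.root ^ 2 * algebraMap K R r =
      hR.map (C p + X * C q + X ^ 2 * C r) := by
    simp [hR.algebraMap_apply, -X_pow_mul_C, -X_mul_C]
  rw [hmap, hR.map_eq_zero_iff, X_pow_dvd_iff]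
  constructor
  · intro h
    simpa [coeff_C, coeff_X, coeff_X_pow] using And.intro (h 0 (by norm_num))
      (And.intro (h 1 (by norm_num)) (h 2 (by norm_num)))
  · rintro ⟨rfl, rfl, rfl⟩
    simp

lemma sq_root_mul_mem_span_pair_iff (hR : IsAdjoinRoot R (X ^ 3 : K[X]))
    {p₀ p₁ p₂ q₁ q₂ f : K} :
    hR.root ^ 2 * algebraMap K R f ∈ Ideal.span
        {algebraMap K R p₀ + hR.root * algebraMap K R p₁ + hR.root ^ 2 * algebraMap K R p₂,
          hR.root * algebraMap K R q₁ + hR.root ^ 2 * algebraMap K R q₂} ↔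
      ∃ c₀ c₁ c₂ d₀ d₁ : K, c₀ * p₀ = 0 ∧ c₀ * p₁ + c₁ * p₀ + d₀ * q₁ = 0 ∧
        c₀ * p₂ + c₁ * p₁ + c₂ * p₀ + d₀ * q₂ + d₁ * q₁ = f := by
  have hu := root_pow_three hR
  set u := hR.root
  set ι := algebraMap K R
  have combination (c₀ c₁ c₂ d₀ d₁ d₂ : K) :
      (ι c₀ + u * ι c₁ + u ^ 2 * ι c₂) * (ι p₀ + u * ι p₁ + u ^ 2 * ι p₂)
        + (ι d₀ + u * ι d₁ + u ^ 2 * ι d₂) * (u * ι q₁ + u ^ 2 * ι q₂) - u ^ 2 * ι f =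
      ι (c₀ * p₀) + u * ι (c₀ * p₁ + c₁ * p₀ + d₀ * q₁)
        + u ^ 2 * ι (c₀ * p₂ + c₁ * p₁ + c₂ * p₀ + d₀ * q₂ + d₁ * q₁ - f) := by
    simp only [map_add, map_mul, map_sub]
    linear_combination (ι c₁ * ι p₂ + ι c₂ * ι p₁ + u * ι c₂ * ι p₂
      + ι d₁ * ι q₂ + ι d₂ * ι q₁ + u * ι d₂ * ι q₂) * hu
  rw [Ideal.mem_span_pair]
  constructor
  · rintro ⟨P, Q, h⟩
    obtain ⟨c₀, c₁, c₂, rfl⟩ := exists_eq_add_root_mul hR P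
    obtain ⟨d₀, d₁, d₂, rfl⟩ := exists_eq_add_root_mul hR Q
    rw [← sub_eq_zero, combination, add_root_mul_eq_zero_iff, sub_eq_zero] at h
    exact ⟨c₀, c₁, c₂, d₀, d₁, h⟩
  · rintro ⟨c₀, c₁, c₂, d₀, d₁, h⟩
    refine ⟨ι c₀ + u * ι c₁ + u ^ 2 * ι c₂, ι d₀ + u * ι d₁ + u ^ 2 * ι 0, ?_⟩
    rwa [← sub_eq_zero, combination, add_root_mul_eq_zero_iff, sub_eq_zero]

end CubicExtension

namespace IsChainUniformizer

variable {K R : Type*} [CommRing K] [CommRing R] [Algebra K R] {y : K} {N : ℕ}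

-- With `c₀ + u c₁ + u² c₂` and `d₀ + u d₁ + u² d₂` the coefficients of a combination lying in
-- `u² K`, its constant term forces `c₀ = r₀ y^(N-a)`, and its `u`-term then forces
-- `d₀ = r y^(N-b) - r₀ c - c₁ y^(a-b)`.
lemma sq_root_mul_mem_span_pair_pow_iff (hy : IsChainUniformizer y N)
    (hR : IsAdjoinRoot R (X ^ 3 : K[X])) {a b : ℕ} (hba : b ≤ a) (haN : a ≤ N)
    {p₁ p₂ q₂ c : K} (hc : y ^ (N - a) * p₁ = y ^ b * c) {f : K} :
    hR.root ^ 2 * algebraMap K R f ∈ Ideal.span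
        {algebraMap K R (y ^ a) + hR.root * algebraMap K R p₁ + hR.root ^ 2 * algebraMap K R p₂,
          hR.root * algebraMap K R (y ^ b) + hR.root ^ 2 * algebraMap K R q₂} ↔
      f ∈ Ideal.span {y ^ (N - a) * p₂ - c * q₂, p₁ - y ^ (a - b) * q₂, y ^ b,
        y ^ (N - b) * q₂} := by
  have pow_a : y ^ (a - b) * y ^ b = y ^ a := pow_sub_mul_pow y hba
  have pow_N : y ^ N = 0 := (hy.pow_eq_zero_iff N).2 le_rfl
  have pow_Na : y ^ (N - a) * y ^ a = 0 := by rw [pow_sub_mul_pow y haN, pow_N]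
  have pow_Nb : y ^ (N - b) * y ^ b = 0 := by rw [pow_sub_mul_pow y (hba.trans haN), pow_N]
  rw [sq_root_mul_mem_span_pair_iff]
  simp only [Ideal.mem_span_insert, Ideal.mem_span_singleton']
  constructor
  · rintro ⟨c₀, c₁, c₂, d₀, d₁, h0, h1, rfl⟩
    obtain ⟨r₀, rfl⟩ := hy.pow_sub_dvd_of_mul_pow_eq_zero h0
    obtain ⟨r, hr⟩ : y ^ (N - b) ∣ d₀ + r₀ * c + c₁ * y ^ (a - b) :=
      hy.pow_sub_dvd_of_mul_pow_eq_zero (by linear_combination h1 - r₀ * hc + c₁ * pow_a)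
    refine ⟨r₀, _, ⟨c₁, _, ⟨c₂ * y ^ (a - b) + d₁, _, ⟨r, rfl⟩, rfl⟩, rfl⟩, ?_⟩
    linear_combination q₂ * hr - c₂ * pow_a
  · rintro ⟨r₀, _, ⟨c₁, _, ⟨d₁, _, ⟨r, rfl⟩, rfl⟩, rfl⟩, rfl⟩
    refine ⟨r₀ * y ^ (N - a), c₁, 0, r * y ^ (N - b) - r₀ * c - c₁ * y ^ (a - b), d₁, ?_, ?_, ?_⟩
    · linear_combination r₀ * pow_Na
    · linear_combination r₀ * hc - c₁ * pow_a + r * pow_Nb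
    · ring

lemma sInf_sq_root_mul_pow_mem_span_pair (hy : IsChainUniformizer y N)
    (hR : IsAdjoinRoot R (X ^ 3 : K[X])) {a b : ℕ} (hba : b ≤ a) (haN : a ≤ N)
    {p₁ p₂ q₂ c : K} (hc : y ^ (N - a) * p₁ = y ^ b * c) {i j l : ℕ}
    (hi : Associated (y ^ i) (y ^ (N - a) * p₂ - c * q₂))
    (hj : Associated (y ^ j) (p₁ - y ^ (a - b) * q₂))
    (hl : Associated (y ^ l) (y ^ (N - b) * q₂)) :
    sInf {k : ℕ | hR.root ^ 2 * algebraMap K R (y ^ k) ∈ Ideal.span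
        {algebraMap K R (y ^ a) + hR.root * algebraMap K R p₁ + hR.root ^ 2 * algebraMap K R p₂,
          hR.root * algebraMap K R (y ^ b) + hR.root ^ 2 * algebraMap K R q₂}} =
      min (min i j) (min b l) := by
  simp only [hy.sq_root_mul_mem_span_pair_pow_iff hR hba haN hc]
  simp only [Ideal.span_insert, span_singleton_eq_of_associated hi,
    span_singleton_eq_of_associated hj, span_singleton_eq_of_associated hl,
    span_pow_sup_span_pow, hy.sInf_pow_mem_span_pow]
  omega

end IsChainUniformizer

section TypeSeven

variable {K R : Type*} [CommRing K] [CommRing R] [Algebra K R]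

/-- The Type 7 ideal of `R = K[u]/⟨u³⟩` with parameters `a`, `b`, `tᵢ`, `hᵢ`, where `y` plays the
role of `x + 1` and `hR.root` that of `u`. -/
def typeSevenIdeal (hR : IsAdjoinRoot R (X ^ 3 : K[X])) (y : K) (a b t₁ t₂ t₃ : ℕ)
    (h₁ h₂ h₃ : K) : Ideal R :=
  Ideal.span
    {algebraMap K R y ^ a + hR.root * algebraMap K R y ^ t₁ * algebraMap K R h₁ +
        hR.root ^ 2 * algebraMap K R y ^ t₂ * algebraMap K R h₂,
      hR.root * algebraMap K R y ^ b + hR.root ^ 2 * algebraMap K R y ^ t₃ * algebraMap K R h₃}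

variable {y : K} {N a b t₁ t₂ t₃ : ℕ} {h₁ h₂ h₃ : K}

theorem sInf_sq_root_mul_pow_mem_typeSevenIdeal (hy : IsChainUniformizer y N)
    (hR : IsAdjoinRoot R (X ^ 3 : K[X])) (hba : b ≤ a) (haN : a ≤ N)
    (hab : h₁ ≠ 0 → a + b ≤ N + t₁) {i j l : ℕ}
    (hi : Associated (y ^ i) (y ^ (N + t₂ - a) * h₂ - y ^ (N + t₁ + t₃ - a - b) * (h₁ * h₃)))
    (hj : Associated (y ^ j) (y ^ t₁ * h₁ - y ^ (a + t₃ - b) * h₃))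
    (hl : Associated (y ^ l) (y ^ (N + t₃ - b) * h₃)) :
    sInf {k : ℕ | hR.root ^ 2 * algebraMap K R y ^ k ∈ typeSevenIdeal hR y a b t₁ t₂ t₃ h₁ h₂ h₃} =
      min (min i j) (min b l) := by
  have hc : y ^ (N - a) * (y ^ t₁ * h₁) = y ^ b * (y ^ (N + t₁ - a - b) * h₁) := by
    rcases eq_or_ne h₁ 0 with rfl | h
    · simp only [mul_zero]
    · rw [← mul_assoc, ← mul_assoc, ← pow_add, ← pow_add]
      congr 2
      have := hab h
      omega
  have hi' : y ^ (N + t₂ - a) * h₂ - y ^ (N + t₁ + t₃ - a - b) * (h₁ * h₃) =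
      y ^ (N - a) * (y ^ t₂ * h₂) - y ^ (N + t₁ - a - b) * h₁ * (y ^ t₃ * h₃) := by
    rw [show N + t₂ - a = N - a + t₂ by omega, pow_add]
    rcases eq_or_ne h₁ 0 with rfl | h
    · ring
    · have := hab h
      rw [show N + t₁ + t₃ - a - b = N + t₁ - a - b + t₃ by omega, pow_add]
      ring
  rw [hi'] at hi
  rw [show a + t₃ - b = a - b + t₃ by omega, pow_add, mul_assoc] at hj
  rw [show N + t₃ - b = N - b + t₃ by omega, pow_add, mul_assoc] at hl
  simpa only [typeSevenIdeal, map_mul, map_pow, mul_assoc] using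
    hy.sInf_sq_root_mul_pow_mem_span_pair hR hba haN hc hi hj hl

theorem stmt16_general (hy : IsChainUniformizer y N) (hR : IsAdjoinRoot R (X ^ 3 : K[X]))
    (hh₁ : h₁ = 0 ∨ IsUnit h₁) (hh₂ : h₂ = 0 ∨ IsUnit h₂) (hh₃ : h₃ = 0 ∨ IsUnit h₃)
    (hba : b ≤ a) (haN : a ≤ N) (ht₁ : t₁ ≤ b) (hab : h₁ ≠ 0 → a + b ≤ N + t₁) {W : ℕ}
    (hW : W = sInf {k : ℕ | hR.root ^ 2 * algebraMap K R y ^ k ∈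
      typeSevenIdeal hR y a b t₁ t₂ t₃ h₁ h₂ h₃})
    {β₃ β₄ : ℕ}
    (hβ₃ : β₃ = if h₂ = 0 then N + t₁ + t₃ - a - b
      else if t₂ + b ≠ t₁ + t₃ then min (N + t₂ - a) (N + t₁ + t₃ - a - b)
      else N + t₁ + t₃ - a - b + truncOrder y N (h₂ - h₁ * h₃))
    (hβ₄ : β₄ = if t₁ + b ≠ a + t₃ then min t₁ (a + t₃ - b)
      else t₁ + truncOrder y N (h₁ - h₃)) :
    (h₁ = 0 → h₂ = 0 → h₃ = 0 → W = b) ∧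
    (h₁ = 0 → h₂ = 0 → h₃ ≠ 0 → W = min b (a + t₃ - b)) ∧
    (h₂ ≠ 0 → h₁ = 0 → h₃ = 0 → W = min (N + t₂ - a) b) ∧
    (h₁ = 0 → h₂ ≠ 0 → h₃ ≠ 0 → W = min (N + t₂ - a) (min b (a + t₃ - b))) ∧
    (h₁ ≠ 0 → h₂ = 0 → h₃ = 0 → W = t₁) ∧
    (h₁ ≠ 0 → h₂ ≠ 0 → h₃ = 0 → W = min (N + t₂ - a) t₁) ∧
    (h₁ ≠ 0 → h₃ ≠ 0 → W = min (min β₃ β₄) (min b (N + t₃ - b))) := by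
  have key {i j l : ℕ} := hW ▸
    sInf_sq_root_mul_pow_mem_typeSevenIdeal (i := i) (j := j) (l := l) hy hR hba haN hab
  have hl := hy.associated_pow_mul hh₃ (N + t₃ - b)
  have W_of_h₁_eq_zero (e₁ : h₁ = 0) :=
    key (by simpa only [e₁, zero_mul, mul_zero, sub_zero] using
        hy.associated_pow_mul hh₂ (N + t₂ - a))
      (by simpa only [e₁, mul_zero, zero_sub] using
        (hy.associated_pow_mul hh₃ (a + t₃ - b)).neg_right) hl
  have W_of_h₃_eq_zero (e₃ : h₃ = 0) :=
    key (by simpa only [e₃, mul_zero, sub_zero] using hy.associated_pow_mul hh₂ (N + t₂ - a))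
      (by simpa only [e₃, mul_zero, sub_zero] using hy.associated_pow_mul hh₁ t₁) hl
  have W_of_ne_zero (n₁ : h₁ ≠ 0) (n₃ : h₃ ≠ 0) : W = min (min β₃ β₄) (min b (N + t₃ - b)) := by
    have u₁ := hh₁.resolve_left n₁
    have u₃ := hh₃.resolve_left n₃
    have hab' := hab n₁
    refine key ?_ ?_ (by simpa only [n₃, if_false] using hl)
    · convert hy.associated_pow_mul_sub hh₂ (u₁.mul u₃) _ _ using 2
      rw [hβ₃]
      split_ifs <;> omega
    · convert hy.associated_pow_mul_sub hh₁ u₃ t₁ (a + t₃ - b) using 2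
      rw [hβ₄, if_neg n₁]
      split_ifs <;> omega
  refine ⟨?_, ?_, ?_, ?_, ?_, ?_, W_of_ne_zero⟩
  all_goals
    intros
    grind

end TypeSeven

section CyclicCodeRing

lemma isChainUniformizer_mk {F : Type*} [Field F] {f q : F[X]} (hq : Irreducible q) {n : ℕ}
    (hf : f = q ^ n) : IsChainUniformizer (AdjoinRoot.mk f q) n where
  isUnit_or_dvd z := by
    obtain ⟨P, rfl⟩ := AdjoinRoot.mk_surjective z
    by_cases hP : q ∣ P
    · exact .inr (map_dvd _ hP)
    · have hcop : IsCoprime f P := hf ▸ ((hq.coprime_iff_not_dvd).2 hP).pow_left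
      have := hcop.map (AdjoinRoot.mk f)
      rw [AdjoinRoot.mk_self, isCoprime_zero_left] at this
      exact .inl this
  pow_eq_zero_iff k := by
    rw [← map_pow, AdjoinRoot.mk_eq_zero, hf, pow_dvd_pow_iff hq.ne_zero hq.not_isUnit]

variable (m s : ℕ)

lemma isChainUniformizer_xK_add_one : IsChainUniformizer (xK m s + 1) (2 ^ s) := by
  have hirr : Irreducible (X + 1 : (Fq m)[X]) := by
    simpa using irreducible_X_sub_C (-1 : Fq m)
  have hg : gK m s = (X + 1) ^ 2 ^ s := by rw [add_pow_char_pow, one_pow]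
  simpa only [xK, map_add, map_one, AdjoinRoot.mk_X] using isChainUniformizer_mk hirr hg

/-- `𝓡` is a `𝓚`-algebra through the natural inclusion. -/
instance : Algebra (KK m s) (RR m s) := (KtoR m s).toAlgebra

lemma uR_pow_three : uR m s ^ 3 = 0 := by
  have huu : uu m ^ 3 = 0 := root_pow_three (AdjoinRoot.isAdjoinRoot _)
  rw [uR, ← map_pow, huu, map_zero]

lemma KtoR_xK : KtoR m s (xK m s) = xR m s := AdjoinRoot.lift_root _

lemma KtoR_of (c : Fq m) :
    KtoR m s (AdjoinRoot.of _ c) = AdjoinRoot.of (gR m s) (AdjoinRoot.of _ c) :=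
  AdjoinRoot.lift_of _

/-- The canonical map `𝓚[u]/⟨u³⟩ → 𝓡`; in the source `x` is adjoined to `F` before `u`, in the
target after `u`. -/
def ofAdjoinCube : AdjoinRoot (X ^ 3 : (KK m s)[X]) →+* RR m s :=
  AdjoinRoot.lift (KtoR m s) (uR m s) (by rw [eval₂_X_pow, uR_pow_three])

lemma ofAdjoinCube_of (z : KK m s) : ofAdjoinCube m s (AdjoinRoot.of _ z) = KtoR m s z :=
  AdjoinRoot.lift_of _

lemma ofAdjoinCube_root : ofAdjoinCube m s (AdjoinRoot.root _) = uR m s :=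
  AdjoinRoot.lift_root _

/-- The inverse of `ofAdjoinCube`. -/
def toAdjoinCube : RR m s →+* AdjoinRoot (X ^ 3 : (KK m s)[X]) :=
  AdjoinRoot.lift
    (AdjoinRoot.lift ((AdjoinRoot.of _).comp (AdjoinRoot.of _)) (AdjoinRoot.root _) <| by
      rw [eval₂_X_pow]
      exact root_pow_three (AdjoinRoot.isAdjoinRoot _))
    (AdjoinRoot.of _ (xK m s))
    (by simpa using congrArg (AdjoinRoot.of (X ^ 3 : (KK m s)[X])) (xK_pow_add_one m s))

lemma toAdjoinCube_xR : toAdjoinCube m s (xR m s) = AdjoinRoot.of _ (xK m s) :=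
  AdjoinRoot.lift_root _

lemma toAdjoinCube_uR : toAdjoinCube m s (uR m s) = AdjoinRoot.root _ :=
  (AdjoinRoot.lift_of _).trans (AdjoinRoot.lift_root _)

lemma toAdjoinCube_KtoR (z : KK m s) : toAdjoinCube m s (KtoR m s z) = AdjoinRoot.of _ z := by
  suffices (toAdjoinCube m s).comp (KtoR m s) = AdjoinRoot.of _ from RingHom.congr_fun this z
  ext c
  · simp [toAdjoinCube, KtoR_of]
  · exact (congrArg _ (KtoR_xK m s)).trans (toAdjoinCube_xR m s)

/-- The identification of `𝓚[u]/⟨u³⟩` with `𝓡`. -/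
def adjoinCubeEquiv : AdjoinRoot (X ^ 3 : (KK m s)[X]) ≃ₐ[KK m s] RR m s :=
  { RingEquiv.ofRingHom (ofAdjoinCube m s) (toAdjoinCube m s)
      (by
        ext
        · simp [toAdjoinCube, ofAdjoinCube_of, KtoR_of]
        · exact (congrArg _ (toAdjoinCube_uR m s)).trans (ofAdjoinCube_root m s)
        · exact (congrArg _ (toAdjoinCube_xR m s)).trans
            ((ofAdjoinCube_of m s _).trans (KtoR_xK m s)))
      (AdjoinRoot.ringHom_ext
        (RingHom.ext fun z =>
          (congrArg _ (ofAdjoinCube_of m s z)).trans (toAdjoinCube_KtoR m s z))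
        ((congrArg _ (ofAdjoinCube_root m s)).trans (toAdjoinCube_uR m s))) with
    commutes' := ofAdjoinCube_of m s }

/-- `𝓡 = 𝓚[u]/⟨u³⟩`, with `uR` as the root. -/
def isAdjoinRootCube : IsAdjoinRoot (RR m s) (X ^ 3 : (KK m s)[X]) :=
  .ofAdjoinRootEquiv (adjoinCubeEquiv m s)

lemma isAdjoinRootCube_root : (isAdjoinRootCube m s).root = uR m s :=
  ofAdjoinCube_root m s

lemma algebraMap_xK_add_one : algebraMap (KK m s) (RR m s) (xK m s + 1) = xR m s + 1 := by
  rw [map_add, map_one]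
  exact congrArg (· + 1) (KtoR_xK m s)

lemma typeSevenIdeal_isAdjoinRootCube (a b t₁ t₂ t₃ : ℕ) (h₁ h₂ h₃ : KK m s) :
    typeSevenIdeal (isAdjoinRootCube m s) (xK m s + 1) a b t₁ t₂ t₃ h₁ h₂ h₃ = Ideal.span
      {(xR m s + 1) ^ a + uR m s * (xR m s + 1) ^ t₁ * KtoR m s h₁ +
          uR m s ^ 2 * (xR m s + 1) ^ t₂ * KtoR m s h₂,
        uR m s * (xR m s + 1) ^ b + uR m s ^ 2 * (xR m s + 1) ^ t₃ * KtoR m s h₃} := by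
  rw [typeSevenIdeal, isAdjoinRootCube_root, algebraMap_xK_add_one]
  rfl

end CyclicCodeRing

/-- The value of `W = min{k : u²(x+1)^k ∈ C₇}` for a Type 7 code. -/
theorem stmt16 (m s : ℕ) (hm : 0 < m) (hs : 0 < s)
    (a b t₁ t₂ t₃ U : ℕ) (h₁ h₂ h₃ : KK m s)
    (hh₁ : h₁ = 0 ∨ IsUnit h₁) (hh₂ : h₂ = 0 ∨ IsUnit h₂) (hh₃ : h₃ = 0 ∨ IsUnit h₃)
    (hU0 : h₁ = 0 → U = a)
    (hU1 : h₁ ≠ 0 → U = min a (2 ^ s + t₁ - a))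
    (hbU : b < U) (hUa : U ≤ a) (ha2 : a ≤ 2 ^ s - 1)
    (ht₁ : t₁ < b)
    (C : Ideal (RR m s))
    (hC : C = Ideal.span
      {(xR m s + 1) ^ a + uR m s * (xR m s + 1) ^ t₁ * KtoR m s h₁ +
         uR m s ^ 2 * (xR m s + 1) ^ t₂ * KtoR m s h₂,
       uR m s * (xR m s + 1) ^ b + uR m s ^ 2 * (xR m s + 1) ^ t₃ * KtoR m s h₃})
    (W : ℕ) (hW : W = sInf {k : ℕ | uR m s ^ 2 * (xR m s + 1) ^ k ∈ C})
    (ht₂ : t₂ < W) (ht₃ : t₃ < W)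
    (α₃ α₄ : ℕ)
    (hα₃ : α₃ = sSup {k : ℕ | k ≤ 2 ^ s ∧ (xK m s + 1) ^ k ∣ (h₂ - h₁ * h₃)})
    (hα₄ : α₄ = sSup {k : ℕ | k ≤ 2 ^ s ∧ (xK m s + 1) ^ k ∣ (h₁ - h₃)})
    (β₃ β₄ : ℕ)
    (hβ₃ : β₃ = if h₂ = 0 then 2 ^ s + t₁ + t₃ - a - b
      else if t₂ + b ≠ t₁ + t₃ then
        min (2 ^ s + t₂ - a) (2 ^ s + t₁ + t₃ - a - b)
      else 2 ^ s + t₁ + t₃ - a - b + α₃)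
    (hβ₄ : β₄ = if t₁ + b ≠ a + t₃ then min t₁ (a + t₃ - b) else t₁ + α₄) :
    (h₁ = 0 → h₂ = 0 → h₃ = 0 → W = b) ∧
    (h₁ = 0 → h₂ = 0 → h₃ ≠ 0 → W = min b (a + t₃ - b)) ∧
    (h₂ ≠ 0 → h₁ = 0 → h₃ = 0 → W = min (2 ^ s + t₂ - a) b) ∧
    (h₁ = 0 → h₂ ≠ 0 → h₃ ≠ 0 → W = min (2 ^ s + t₂ - a) (min b (a + t₃ - b))) ∧
    (h₁ ≠ 0 → h₂ = 0 → h₃ = 0 → W = t₁) ∧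
    (h₁ ≠ 0 → h₂ ≠ 0 → h₃ = 0 → W = min (2 ^ s + t₂ - a) t₁) ∧
    (h₁ ≠ 0 → h₃ ≠ 0 → W = min (min β₃ β₄) (min b (2 ^ s + t₃ - b))) := by
  subst hC hα₃ hα₄
  rw [← typeSevenIdeal_isAdjoinRootCube, ← isAdjoinRootCube_root, ← algebraMap_xK_add_one] at hW
  exact stmt16_general (isChainUniformizer_xK_add_one m s) (isAdjoinRootCube m s) hh₁ hh₂ hh₃
    (by omega) (by omega) ht₁.le (fun h => by have := hU1 h; omega) hW hβ₃ hβ₄
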